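/- Let r, s be real numbers with 0 ≤ r < 1, 0 ≤ s < 1, and 0 < r + s ≤ 1. Then there is a constant C > 0 such that for every T with 0 < T ≤ 1 and all continuous maps φ, ψ from ℝ into the Schwartz space 𝓢(ℝ², ℂ), one has (∫₀^T ‖φ(t)ψ(t)‖²_{H^{r+s−1}} dt)^{1/2} ≤ C T^{1/2} (sup_{t∈[0,T]} ‖φ(t)‖_{H^r}) (sup_{t∈[0,T]} ‖ψ(t)‖_{H^s}), where φ(t)ψ(t) denotes the pointwise product on ℝ². -/

import Mathlib

open MeasureTheory
open scoped FourierTransform ENNReal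

/-- The Sobolev norm ‖f‖_{H^σ} = ‖⟨ξ⟩^σ f̂(ξ)‖_{L²_ξ(ℝ²)} of a function f : ℝ² → ℂ,
where ⟨ξ⟩ = (1+|ξ|²)^{1/2} and f̂ is the Fourier transform; valued in [0,∞]. -/
noncomputable def sobolevNorm (σ : ℝ) (f : EuclideanSpace ℝ (Fin 2) → ℂ) : ℝ≥0∞ :=
  (∫⁻ ξ, (ENNReal.ofReal ((1 + ‖ξ‖ ^ 2) ^ (σ / 2)) * ‖𝓕 f ξ‖₊) ^ 2) ^ (1/2 : ℝ)

/-! In dimension `d`, and after moving the weights `⟨η⟩^r` and `⟨ξ - η⟩^s` onto `𝓕 f` and `𝓕 g`, the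
product estimate `H^r × H^s → H^{r+s-d/2}` is an `L² × L² → L²` bound for the convolution weighted
by `⟨ξ⟩^{-c} ⟨η⟩^{-a} ⟨ξ - η⟩^{-b}`, where `a = r`, `b = s`, `c = d/2 - r - s`. Since
`ξ = η + (ξ - η)`, the two largest of the three frequencies are comparable, so the weight is
controlled by `⟨x⟩^{-a'} ⟨y⟩^{a' - d/2}`, where `x` is the smallest frequency, `y` is another one
and `a' ∈ {a, b, c}` is the exponent of `x`. As `a' < d/2`, the square of this kernel integrates
over `‖x‖ ≤ ‖y‖` to a bound independent of `y`, and Cauchy–Schwarz and Tonelli conclude. The time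
integral costs only the factor `T^{1/2}`, because the product estimate holds at each time. -/

open Module Metric
open scoped NNReal SchwartzMap

theorem rpow_setLIntegral_rpow_le {α : Type*} [MeasurableSpace α] {μ : Measure α} {S : Set α}
    (hS : MeasurableSet S) {p : ℝ} (hp : 0 < p) {F : α → ℝ≥0∞} {M : ℝ≥0∞}
    (hF : ∀ t ∈ S, F t ≤ M) :
    (∫⁻ t in S, F t ^ p ∂μ) ^ (1 / p) ≤ M * μ S ^ (1 / p) := by
  calc (∫⁻ t in S, F t ^ p ∂μ) ^ (1 / p)
    _ ≤ (∫⁻ _ in S, M ^ p ∂μ) ^ (1 / p) := by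
      gcongr ?_ ^ _
      exact setLIntegral_mono' hS fun t ht ↦ by gcongr; exact hF t ht
    _ = M * μ S ^ (1 / p) := by
      rw [setLIntegral_const, ENNReal.mul_rpow_of_nonneg _ _ (by positivity), ← ENNReal.rpow_mul,
        mul_one_div_cancel hp.ne', ENNReal.rpow_one]

section ConvolutionKernel

theorem sq_lintegral_mul_le {α : Type*} [MeasurableSpace α] {μ : Measure α} {f g : α → ℝ≥0∞}
    (hf : AEMeasurable f μ) (hg : AEMeasurable g μ) :
    (∫⁻ a, f a * g a ∂μ) ^ 2 ≤ (∫⁻ a, f a ^ 2 ∂μ) * ∫⁻ a, g a ^ 2 ∂μ := by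
  have holder := ENNReal.lintegral_mul_le_Lp_mul_Lq μ Real.HolderConjugate.two_two hf hg
  simp only [Pi.mul_apply, ENNReal.rpow_two] at holder
  calc (∫⁻ a, f a * g a ∂μ) ^ 2
    _ ≤ ((∫⁻ a, f a ^ 2 ∂μ) ^ (1 / 2 : ℝ) * (∫⁻ a, g a ^ 2 ∂μ) ^ (1 / 2 : ℝ)) ^ 2 := by gcongr
    _ = (∫⁻ a, f a ^ 2 ∂μ) * ∫⁻ a, g a ^ 2 ∂μ := by
      rw [mul_pow, ← ENNReal.rpow_two, ← ENNReal.rpow_two, ← ENNReal.rpow_mul, ← ENNReal.rpow_mul]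
      norm_num

variable {G : Type*} [AddGroup G] [MeasurableSpace G]

/-- Boundedness from `L² × L²` to `L²` of the weighted convolution
`(f, g) ↦ (ξ ↦ ∫ η, k (ξ, η) f(η) g(ξ - η))` with kernel `k`, tested on nonnegative functions. -/
def IsL2ConvKernel (μ : Measure G) (k : G × G → ℝ≥0∞) : Prop :=
  ∃ C : ℝ≥0, ∀ f g : G → ℝ≥0∞, Measurable f → Measurable g →
    ∫⁻ ξ, (∫⁻ η, k (ξ, η) * (f η * g (ξ - η)) ∂μ) ^ 2 ∂μ ≤
      C * ((∫⁻ η, f η ^ 2 ∂μ) * ∫⁻ η, g η ^ 2 ∂μ)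

namespace IsL2ConvKernel

variable {μ : Measure G} {k k' : G × G → ℝ≥0∞}

theorem mono (hk' : IsL2ConvKernel μ k') (h : k ≤ k') : IsL2ConvKernel μ k := by
  obtain ⟨C, hC⟩ := hk'
  refine ⟨C, fun f g hf hg ↦ le_trans ?_ (hC f g hf hg)⟩
  gcongr with ξ η
  exact h (ξ, η)

theorem const_mul (hk : IsL2ConvKernel μ k) (c : ℝ≥0) : IsL2ConvKernel μ (fun p ↦ c * k p) := by
  obtain ⟨C, hC⟩ := hk
  refine ⟨c ^ 2 * C, fun f g hf hg ↦ ?_⟩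
  simp_rw [mul_assoc, lintegral_const_mul' _ _ ENNReal.coe_ne_top, mul_pow]
  rw [lintegral_const_mul' _ _ (by finiteness)]
  push_cast
  rw [mul_assoc]
  gcongr
  exact hC f g hf hg

theorem add [MeasurableSub₂ G] [SFinite μ] (hk : IsL2ConvKernel μ k) (hk' : IsL2ConvKernel μ k')
    (hkm : Measurable k) : IsL2ConvKernel μ (k + k') := by
  obtain ⟨C, hC⟩ := hk
  obtain ⟨C', hC'⟩ := hk'
  refine ⟨2 * (C + C'), fun f g hf hg ↦ ?_⟩
  set u : G → ℝ≥0∞ := fun ξ ↦ ∫⁻ η, k (ξ, η) * (f η * g (ξ - η)) ∂μ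
  set v : G → ℝ≥0∞ := fun ξ ↦ ∫⁻ η, k' (ξ, η) * (f η * g (ξ - η)) ∂μ
  have hu : Measurable u :=
    Measurable.lintegral_prod_right' (f := fun p : G × G ↦ k p * (f p.2 * g (p.1 - p.2)))
      (by fun_prop)
  have add_sq_le (x y : ℝ≥0∞) : (x + y) ^ 2 ≤ 2 * (x ^ 2 + y ^ 2) := by
    have := ENNReal.rpow_add_le_mul_rpow_add_rpow x y one_le_two
    norm_num [ENNReal.rpow_two] at this
    exact this
  calc ∫⁻ ξ, (∫⁻ η, (k + k') (ξ, η) * (f η * g (ξ - η)) ∂μ) ^ 2 ∂μ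
    _ = ∫⁻ ξ, (u ξ + v ξ) ^ 2 ∂μ := by
      refine lintegral_congr fun ξ ↦ ?_
      simp only [Pi.add_apply, add_mul]
      rw [lintegral_add_left (by fun_prop)]
    _ ≤ ∫⁻ ξ, 2 * (u ξ ^ 2 + v ξ ^ 2) ∂μ := lintegral_mono fun ξ ↦ add_sq_le _ _
    _ = 2 * (∫⁻ ξ, u ξ ^ 2 ∂μ + ∫⁻ ξ, v ξ ^ 2 ∂μ) := by
      rw [lintegral_const_mul' _ _ (by finiteness), lintegral_add_left (hu.pow_const 2)]
    _ ≤ 2 * (C * ((∫⁻ η, f η ^ 2 ∂μ) * ∫⁻ η, g η ^ 2 ∂μ) +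
          C' * ((∫⁻ η, f η ^ 2 ∂μ) * ∫⁻ η, g η ^ 2 ∂μ)) :=
      mul_le_mul_right (add_le_add (hC f g hf hg) (hC' f g hf hg)) 2
    _ = _ := by push_cast; ring

theorem of_lintegral_snd_sq_le [MeasurableSub₂ G] [MeasurableAdd G] [SFinite μ]
    [μ.IsAddRightInvariant] (hk : Measurable k) {C : ℝ≥0}
    (hC : ∀ ξ, ∫⁻ η, k (ξ, η) ^ 2 ∂μ ≤ C) : IsL2ConvKernel μ k := by
  refine ⟨C, fun f g hf hg ↦ ?_⟩
  calc ∫⁻ ξ, (∫⁻ η, k (ξ, η) * (f η * g (ξ - η)) ∂μ) ^ 2 ∂μ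
    _ ≤ ∫⁻ ξ, C * ∫⁻ η, (f η * g (ξ - η)) ^ 2 ∂μ ∂μ := by
      gcongr with ξ
      exact (sq_lintegral_mul_le (by fun_prop) (by fun_prop)).trans (by gcongr; exact hC ξ)
    _ = C * ∫⁻ η, ∫⁻ ξ, (f η * g (ξ - η)) ^ 2 ∂μ ∂μ := by
      rw [lintegral_const_mul' _ _ ENNReal.coe_ne_top, lintegral_lintegral_swap]
      exact Measurable.aemeasurable (by fun_prop)
    _ = C * ∫⁻ η, f η ^ 2 * ∫⁻ ζ, g ζ ^ 2 ∂μ ∂μ := by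
      congr! 3 with η
      simp_rw [mul_pow]
      rw [lintegral_const_mul _ (by fun_prop), lintegral_sub_right_eq_self (fun ζ ↦ g ζ ^ 2) η]
    _ = C * ((∫⁻ η, f η ^ 2 ∂μ) * ∫⁻ η, g η ^ 2 ∂μ) := by rw [lintegral_mul_const _ (by fun_prop)]

theorem of_lintegral_fst_sq_le [MeasurableAdd G] [MeasurableNeg G] [SFinite μ]
    [μ.IsAddLeftInvariant] [μ.IsNegInvariant] (hk : Measurable k) {C : ℝ≥0}
    (hC : ∀ η, ∫⁻ ξ, k (ξ, η) ^ 2 ∂μ ≤ C) : IsL2ConvKernel μ k := by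
  refine ⟨C, fun f g hf hg ↦ ?_⟩
  calc ∫⁻ ξ, (∫⁻ η, k (ξ, η) * (f η * g (ξ - η)) ∂μ) ^ 2 ∂μ
    _ ≤ ∫⁻ ξ, (∫⁻ η, (k (ξ, η) * f η) ^ 2 ∂μ) * ∫⁻ ζ, g ζ ^ 2 ∂μ ∂μ := by
      gcongr with ξ
      simp_rw [← mul_assoc]
      rw [← lintegral_sub_left_eq_self (fun ζ ↦ g ζ ^ 2) ξ]
      exact sq_lintegral_mul_le (by fun_prop) (by fun_prop)
    _ = (∫⁻ η, ∫⁻ ξ, (k (ξ, η) * f η) ^ 2 ∂μ ∂μ) * ∫⁻ ζ, g ζ ^ 2 ∂μ := by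
      rw [lintegral_mul_const, lintegral_lintegral_swap]
      · exact Measurable.aemeasurable (by fun_prop)
      · exact Measurable.lintegral_prod_right' (f := fun p : G × G ↦ (k p * f p.2) ^ 2)
          (by fun_prop)
    _ ≤ (∫⁻ η, C * f η ^ 2 ∂μ) * ∫⁻ ζ, g ζ ^ 2 ∂μ := by
      gcongr with η
      simp_rw [mul_pow]
      rw [lintegral_mul_const _ (by fun_prop)]
      gcongr
      exact hC η
    _ = C * ((∫⁻ η, f η ^ 2 ∂μ) * ∫⁻ η, g η ^ 2 ∂μ) := by
      rw [lintegral_const_mul _ (by fun_prop), mul_assoc]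

end IsL2ConvKernel

end ConvolutionKernel

section BracketPow

variable {E : Type*} [NormedAddCommGroup E]

/-- The power `⟨x⟩ ^ σ` of the Japanese bracket `⟨x⟩ = (1 + ‖x‖²)^{1/2}`, the Fourier weight of
`H^σ`. It takes values in `ℝ≥0∞` so that it can be used directly under lower integrals. -/
noncomputable def bracketPow (σ : ℝ) (x : E) : ℝ≥0∞ :=
  ENNReal.ofReal ((1 + ‖x‖ ^ 2) ^ (σ / 2))

@[fun_prop]
theorem measurable_bracketPow [MeasurableSpace E] [OpensMeasurableSpace E] (σ : ℝ) :
    Measurable (bracketPow σ : E → ℝ≥0∞) := by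
  unfold bracketPow
  fun_prop

theorem bracketPow_zero (x : E) : bracketPow 0 x = 1 := by simp [bracketPow]

theorem bracketPow_mul_bracketPow (σ τ : ℝ) (x : E) :
    bracketPow σ x * bracketPow τ x = bracketPow (σ + τ) x := by
  rw [bracketPow, bracketPow, bracketPow, ← ENNReal.ofReal_mul (by positivity),
    ← Real.rpow_add (by positivity), add_div]

theorem bracketPow_sq (σ : ℝ) (x : E) : bracketPow σ x ^ 2 = bracketPow (2 * σ) x := by
  rw [sq, bracketPow_mul_bracketPow, two_mul]

theorem bracketPow_ne_top (σ : ℝ) (x : E) : bracketPow σ x ≠ ∞ := ENNReal.ofReal_ne_top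

theorem bracketPow_le_bracketPow {σ : ℝ} (hσ : 0 ≤ σ) {x y : E} (h : ‖x‖ ≤ ‖y‖) :
    bracketPow σ x ≤ bracketPow σ y := by
  unfold bracketPow
  gcongr

theorem bracketPow_le_two_rpow_abs_mul {x y : E} (σ : ℝ) (hxy : ‖x‖ ≤ 2 * ‖y‖)
    (hyx : ‖y‖ ≤ 2 * ‖x‖) : bracketPow σ x ≤ (2 ^ |σ| : ℝ≥0) * bracketPow σ y := by
  have hx : 1 + ‖x‖ ^ 2 ≤ 4 * (1 + ‖y‖ ^ 2) := by nlinarith [norm_nonneg x]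
  have hy : (1 + ‖y‖ ^ 2) / 4 ≤ 1 + ‖x‖ ^ 2 := by nlinarith [norm_nonneg y]
  have two_rpow (τ : ℝ) : (4 : ℝ) ^ (τ / 2) = 2 ^ τ := by
    rw [show (4 : ℝ) = 2 ^ (2 : ℝ) by norm_num, ← Real.rpow_mul (by norm_num), mul_div_cancel₀]
    norm_num
  rw [bracketPow, bracketPow, ← ENNReal.ofReal_coe_nnreal, ← ENNReal.ofReal_mul (by positivity)]
  refine ENNReal.ofReal_le_ofReal ?_
  push_cast
  rcases le_total 0 σ with hσ | hσ
  · calc (1 + ‖x‖ ^ 2) ^ (σ / 2)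
      _ ≤ (4 * (1 + ‖y‖ ^ 2)) ^ (σ / 2) := by gcongr
      _ = 2 ^ |σ| * (1 + ‖y‖ ^ 2) ^ (σ / 2) := by
        rw [Real.mul_rpow (by norm_num) (by positivity), two_rpow, abs_of_nonneg hσ]
  · calc (1 + ‖x‖ ^ 2) ^ (σ / 2)
      _ ≤ ((1 + ‖y‖ ^ 2) / 4) ^ (σ / 2) :=
        Real.rpow_le_rpow_of_nonpos (by positivity) hy (by linarith)
      _ = 2 ^ |σ| * (1 + ‖y‖ ^ 2) ^ (σ / 2) := by
        rw [Real.div_rpow (by positivity) (by norm_num), two_rpow, abs_of_nonpos hσ,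
          Real.rpow_neg (by norm_num), div_eq_inv_mul]

variable [NormedSpace ℝ E] [FiniteDimensional ℝ E] [MeasurableSpace E] [BorelSpace E]
  (μ : Measure E) [μ.IsAddHaarMeasure]

theorem setLIntegral_ball_rpow_norm (p : ℝ) {R : ℝ} (hR : 0 < R) :
    ∫⁻ x in ball 0 R, ENNReal.ofReal (‖x‖ ^ p) ∂μ =
      ENNReal.ofReal (R ^ (finrank ℝ E + p)) * ∫⁻ x in ball 0 1, ENNReal.ofReal (‖x‖ ^ p) ∂μ := by
  have hμ : μ = ENNReal.ofReal (R ^ finrank ℝ E) • μ.map (R • ·) := by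
    rw [Measure.map_addHaar_smul μ hR.ne', smul_smul, ← ENNReal.ofReal_mul (by positivity),
      abs_of_pos (by positivity), mul_inv_cancel₀ (by positivity), ENNReal.ofReal_one, one_smul]
  have hball : (R • · : E → E) ⁻¹' ball 0 R = ball 0 1 := by
    ext x
    simp [norm_smul, abs_of_pos hR, hR]
  calc ∫⁻ x in ball 0 R, ENNReal.ofReal (‖x‖ ^ p) ∂μ
    _ = ENNReal.ofReal (R ^ finrank ℝ E) * ∫⁻ x in ball 0 1, ENNReal.ofReal (‖R • x‖ ^ p) ∂μ := by
      conv_lhs => rw [hμ]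
      rw [setLIntegral_smul_measure, setLIntegral_map measurableSet_ball (by fun_prop)
        (by fun_prop), hball, smul_eq_mul]
    _ = ENNReal.ofReal (R ^ finrank ℝ E) *
          (ENNReal.ofReal (R ^ p) * ∫⁻ x in ball 0 1, ENNReal.ofReal (‖x‖ ^ p) ∂μ) := by
      simp only [norm_smul, Real.norm_of_nonneg hR.le, Real.mul_rpow hR.le (norm_nonneg _),
        ENNReal.ofReal_mul (Real.rpow_nonneg hR.le p)]
      rw [lintegral_const_mul' _ _ ENNReal.ofReal_ne_top]
    _ = _ := by
      rw [← mul_assoc, ← ENNReal.ofReal_mul (by positivity), Real.rpow_add hR, Real.rpow_natCast]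

theorem setLIntegral_ball_rpow_norm_lt_top [Nontrivial E] {p : ℝ} (hp : -finrank ℝ E < p) :
    ∫⁻ x in ball (0 : E) 1, ENNReal.ofReal (‖x‖ ^ p) ∂μ < ∞ := by
  have h : IntegrableOn (fun x : E ↦ ‖x‖ ^ p) (ball 0 1) μ :=
    integrableOn_ball_of_norm_le_rpow (C := 1) (α := -p) finrank_pos (by linarith)
      (.of_forall fun x ↦ by simp [abs_of_nonneg (Real.rpow_nonneg (norm_nonneg x) p)])
      (Measurable.aestronglyMeasurable (by fun_prop))
  exact h.lintegral_lt_top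

theorem exists_setLIntegral_bracketPow_le_of_nonpos [Nontrivial E] {σ : ℝ}
    (hσ : -finrank ℝ E < σ) (hσ0 : σ ≤ 0) :
    ∃ C : ℝ≥0, ∀ y : E, ∫⁻ x in closedBall 0 ‖y‖, bracketPow σ x ∂μ ≤
      C * bracketPow (finrank ℝ E + σ) y := by
  lift ∫⁻ x in ball (0 : E) 1, ENNReal.ofReal (‖x‖ ^ σ) ∂μ to ℝ≥0
    using (setLIntegral_ball_rpow_norm_lt_top μ hσ).ne with C hC
  refine ⟨C, fun y ↦ ?_⟩
  have hy : ‖y‖ < √(1 + ‖y‖ ^ 2) := Real.lt_sqrt_of_sq_lt (by linarith)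
  have bracketPow_le : ∀ᵐ x ∂μ, bracketPow σ x ≤ ENNReal.ofReal (‖x‖ ^ σ) := by
    filter_upwards [Measure.ae_ne μ 0] with x hx0
    have hx : 0 < ‖x‖ := norm_pos_iff.2 hx0
    refine ENNReal.ofReal_le_ofReal ?_
    calc (1 + ‖x‖ ^ 2) ^ (σ / 2) ≤ (‖x‖ ^ 2) ^ (σ / 2) :=
          Real.rpow_le_rpow_of_nonpos (pow_pos hx 2) (by linarith) (by linarith)
      _ = ‖x‖ ^ σ := by
          rw [← Real.rpow_natCast_mul (norm_nonneg x)]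
          congr 1
          push_cast
          ring
  calc ∫⁻ x in closedBall 0 ‖y‖, bracketPow σ x ∂μ
    _ ≤ ∫⁻ x in ball 0 √(1 + ‖y‖ ^ 2), bracketPow σ x ∂μ :=
      lintegral_mono_set (closedBall_subset_ball hy)
    _ ≤ ∫⁻ x in ball 0 √(1 + ‖y‖ ^ 2), ENNReal.ofReal (‖x‖ ^ σ) ∂μ :=
      lintegral_mono_ae (ae_restrict_of_ae bracketPow_le)
    _ = C * bracketPow (finrank ℝ E + σ) y := by
      rw [setLIntegral_ball_rpow_norm μ σ (by positivity), hC, mul_comm, bracketPow,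
        Real.sqrt_eq_rpow, ← Real.rpow_mul (by positivity)]
      congr 3
      ring

theorem exists_setLIntegral_bracketPow_le [Nontrivial E] {σ : ℝ} (hσ : -finrank ℝ E < σ) :
    ∃ C : ℝ≥0, ∀ y : E, ∫⁻ x in closedBall 0 ‖y‖, bracketPow σ x ∂μ ≤
      C * bracketPow (finrank ℝ E + σ) y := by
  have hd : (0 : ℝ) < finrank ℝ E := mod_cast finrank_pos
  rcases le_total σ 0 with hσ0 | hσ0
  · exact exists_setLIntegral_bracketPow_le_of_nonpos μ hσ hσ0
  obtain ⟨C, hC⟩ := exists_setLIntegral_bracketPow_le_of_nonpos μ (E := E) (σ := 0)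
    (by linarith) le_rfl
  refine ⟨C, fun y ↦ ?_⟩
  calc ∫⁻ x in closedBall 0 ‖y‖, bracketPow σ x ∂μ
    _ ≤ ∫⁻ x in closedBall 0 ‖y‖, bracketPow σ y * bracketPow 0 x ∂μ := by
      refine setLIntegral_mono' measurableSet_closedBall fun x hx ↦ ?_
      rw [bracketPow_zero, mul_one]
      exact bracketPow_le_bracketPow hσ0 (mem_closedBall_zero_iff.1 hx)
    _ ≤ bracketPow σ y * (C * bracketPow (finrank ℝ E + 0) y) := by
      rw [lintegral_const_mul' _ _ (bracketPow_ne_top σ y)]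
      gcongr
      exact hC y
    _ = C * bracketPow (finrank ℝ E + σ) y := by
      rw [mul_left_comm, bracketPow_mul_bracketPow, add_zero, add_comm]

end BracketPow

section BracketPowConvolution

variable {E : Type*} [NormedAddCommGroup E] [NormedSpace ℝ E]

/-- The part `‖x‖ ≤ ‖y‖` of the kernel `⟨x⟩^{-a} ⟨y⟩^{a - d/2}`, `d = dim E`. The two exponents
are balanced so that, for `a < d/2`, it is square integrable in `x` uniformly in `y`. -/
noncomputable def lowHighKernel (a : ℝ) (x y : E) : ℝ≥0∞ :=
  if ‖x‖ ≤ ‖y‖ then bracketPow (-a) x * bracketPow (a - finrank ℝ E / 2) y else 0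

theorem bracketPow_mul_le_lowHighKernel {a b c : ℝ} (habc : a + b + c = finrank ℝ E / 2)
    {x y z : E} (hxy : ‖x‖ ≤ ‖y‖) (hxz : ‖x‖ ≤ ‖z‖) (hyxz : ‖y‖ ≤ ‖x‖ + ‖z‖)
    (hzxy : ‖z‖ ≤ ‖x‖ + ‖y‖) :
    bracketPow (-a) x * (bracketPow (-b) y * bracketPow (-c) z) ≤
      (2 ^ |c| : ℝ≥0) * lowHighKernel a x y := by
  have hz := bracketPow_le_two_rpow_abs_mul (x := z) (y := y) (-c) (by linarith) (by linarith)
  rw [abs_neg] at hz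
  calc bracketPow (-a) x * (bracketPow (-b) y * bracketPow (-c) z)
    _ ≤ bracketPow (-a) x * (bracketPow (-b) y * ((2 ^ |c| : ℝ≥0) * bracketPow (-c) y)) := by
      gcongr
    _ = (2 ^ |c| : ℝ≥0) * (bracketPow (-a) x * (bracketPow (-b) y * bracketPow (-c) y)) := by ring
    _ = (2 ^ |c| : ℝ≥0) * lowHighKernel a x y := by
      rw [lowHighKernel, if_pos hxy, bracketPow_mul_bracketPow,
        show -b + -c = a - finrank ℝ E / 2 by linarith]

theorem bracketPow_mul_le_sum_lowHighKernel {a b c : ℝ} (habc : a + b + c = finrank ℝ E / 2)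
    (ξ η : E) :
    bracketPow (-c) ξ * (bracketPow (-a) η * bracketPow (-b) (ξ - η)) ≤
      (2 ^ |b| : ℝ≥0) * lowHighKernel a η ξ + (2 ^ |a| : ℝ≥0) * lowHighKernel b (ξ - η) ξ +
        (2 ^ |b| : ℝ≥0) * lowHighKernel c ξ η := by
  have hξ : ‖ξ‖ ≤ ‖η‖ + ‖ξ - η‖ := norm_le_insert' ξ η
  have hη : ‖η‖ ≤ ‖ξ‖ + ‖ξ - η‖ := norm_le_insert ξ η
  have hζ : ‖ξ - η‖ ≤ ‖ξ‖ + ‖η‖ := norm_sub_le ξ η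
  by_cases lowη : ‖η‖ ≤ ‖ξ‖ ∧ ‖η‖ ≤ ‖ξ - η‖
  · have := bracketPow_mul_le_lowHighKernel (a := a) (b := c) (c := b) (by linarith)
      lowη.1 lowη.2 hξ (by linarith)
    rw [mul_left_comm]
    exact this.trans (le_add_right le_self_add)
  by_cases lowζ : ‖ξ - η‖ ≤ ‖ξ‖ ∧ ‖ξ - η‖ ≤ ‖η‖
  · have := bracketPow_mul_le_lowHighKernel (a := b) (b := c) (c := a) (by linarith)
      lowζ.1 lowζ.2 (by linarith) (by linarith)
    calc bracketPow (-c) ξ * (bracketPow (-a) η * bracketPow (-b) (ξ - η))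
      _ = bracketPow (-b) (ξ - η) * (bracketPow (-c) ξ * bracketPow (-a) η) := by ring
      _ ≤ _ := this.trans (le_add_right le_add_self)
  · have lowξ : ‖ξ‖ ≤ ‖η‖ ∧ ‖ξ‖ ≤ ‖ξ - η‖ := by grind
    have := bracketPow_mul_le_lowHighKernel (a := c) (b := a) (c := b) (by linarith)
      lowξ.1 lowξ.2 hη hζ
    exact this.trans le_add_self

variable [MeasurableSpace E] [BorelSpace E]

theorem measurable_lowHighKernel (a : ℝ) :
    Measurable fun p : E × E ↦ lowHighKernel a p.1 p.2 :=
  Measurable.ite (measurableSet_le (by fun_prop) (by fun_prop)) (by fun_prop) measurable_const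

variable [FiniteDimensional ℝ E] (μ : Measure E) [μ.IsAddHaarMeasure]

theorem exists_lintegral_lowHighKernel_sq_le [Nontrivial E] {a : ℝ} (ha : a < finrank ℝ E / 2) :
    ∃ C : ℝ≥0, ∀ y : E, ∫⁻ x, lowHighKernel a x y ^ 2 ∂μ ≤ C := by
  obtain ⟨C, hC⟩ := exists_setLIntegral_bracketPow_le μ (E := E) (σ := -(2 * a)) (by linarith)
  refine ⟨C, fun y ↦ ?_⟩
  have kernel_sq (x : E) : lowHighKernel a x y ^ 2 = (closedBall 0 ‖y‖).indicator
      (fun x ↦ bracketPow (2 * a - finrank ℝ E) y * bracketPow (-(2 * a)) x) x := by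
    by_cases h : ‖x‖ ≤ ‖y‖
    · rw [lowHighKernel, if_pos h, Set.indicator_of_mem (mem_closedBall_zero_iff.2 h), mul_pow,
        bracketPow_sq, bracketPow_sq, mul_comm]
      congr 2 <;> ring
    · simp [lowHighKernel, h]
  calc ∫⁻ x, lowHighKernel a x y ^ 2 ∂μ
    _ = bracketPow (2 * a - finrank ℝ E) y *
          ∫⁻ x in closedBall 0 ‖y‖, bracketPow (-(2 * a)) x ∂μ := by
      simp_rw [kernel_sq]
      rw [lintegral_indicator measurableSet_closedBall,
        lintegral_const_mul' _ _ (bracketPow_ne_top _ y)]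
    _ ≤ bracketPow (2 * a - finrank ℝ E) y * (C * bracketPow (finrank ℝ E + -(2 * a)) y) := by
      gcongr
      exact hC y
    _ = C := by
      rw [mul_left_comm, bracketPow_mul_bracketPow,
        show 2 * a - finrank ℝ E + (finrank ℝ E + -(2 * a)) = 0 by ring, bracketPow_zero, mul_one]

theorem isL2ConvKernel_bracketPow [Nontrivial E] {a b c : ℝ} (habc : a + b + c = finrank ℝ E / 2)
    (ha : a < finrank ℝ E / 2) (hb : b < finrank ℝ E / 2) (hc : c < finrank ℝ E / 2) :
    IsL2ConvKernel μ fun p : E × E ↦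
      bracketPow (-c) p.1 * (bracketPow (-a) p.2 * bracketPow (-b) (p.1 - p.2)) := by
  obtain ⟨A, hA⟩ := exists_lintegral_lowHighKernel_sq_le μ ha
  obtain ⟨B, hB⟩ := exists_lintegral_lowHighKernel_sq_le μ hb
  obtain ⟨C, hC⟩ := exists_lintegral_lowHighKernel_sq_le μ hc
  have measA : Measurable fun p : E × E ↦ lowHighKernel a p.2 p.1 :=
    (measurable_lowHighKernel a).comp measurable_swap
  have measB : Measurable fun p : E × E ↦ lowHighKernel b (p.1 - p.2) p.1 :=
    (measurable_lowHighKernel b).comp (f := fun p : E × E ↦ (p.1 - p.2, p.1)) (by fun_prop)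
  have kerA : IsL2ConvKernel μ fun p : E × E ↦ lowHighKernel a p.2 p.1 :=
    .of_lintegral_snd_sq_le measA hA
  have kerB : IsL2ConvKernel μ fun p : E × E ↦ lowHighKernel b (p.1 - p.2) p.1 :=
    .of_lintegral_snd_sq_le measB fun ξ ↦
      (lintegral_sub_left_eq_self (fun ζ ↦ lowHighKernel b ζ ξ ^ 2) ξ).trans_le (hB ξ)
  have kerC : IsL2ConvKernel μ fun p : E × E ↦ lowHighKernel c p.1 p.2 :=
    .of_lintegral_fst_sq_le (measurable_lowHighKernel c) hC
  exact (((kerA.const_mul (2 ^ |b|)).add (kerB.const_mul (2 ^ |a|)) (measA.const_mul _)).add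
    (kerC.const_mul (2 ^ |b|)) ((measA.const_mul _).add (measB.const_mul _))).mono
      fun p ↦ bracketPow_mul_le_sum_lowHighKernel habc p.1 p.2

end BracketPowConvolution

section SobolevProduct

variable {E F F₁ F₂ F₃ : Type*} [NormedAddCommGroup E] [InnerProductSpace ℝ E]
  [FiniteDimensional ℝ E] [MeasurableSpace E] [BorelSpace E]
  [NormedAddCommGroup F] [NormedSpace ℂ F]
  [NormedAddCommGroup F₁] [NormedSpace ℂ F₁] [CompleteSpace F₁]
  [NormedAddCommGroup F₂] [NormedSpace ℂ F₂] [CompleteSpace F₂]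
  [NormedAddCommGroup F₃] [NormedSpace ℂ F₃] [CompleteSpace F₃]

/-- The `H^σ` norm `‖⟨ξ⟩^σ 𝓕 f‖_{L²}` of a function on a finite-dimensional inner product space
with values in a complex normed space. On scalar functions on `ℝ²` it is `sobolevNorm`. -/
noncomputable def sobolevENorm (σ : ℝ) (f : E → F) : ℝ≥0∞ :=
  (∫⁻ ξ, (bracketPow σ ξ * ‖𝓕 f ξ‖ₑ) ^ 2) ^ (1 / 2 : ℝ)

theorem sobolevNorm_eq_sobolevENorm (σ : ℝ) (f : EuclideanSpace ℝ (Fin 2) → ℂ) :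
    sobolevNorm σ f = sobolevENorm σ f := rfl

theorem fourier_fourier_apply_neg [CompleteSpace F] (f : 𝓢(E, F)) (x : E) :
    𝓕 (𝓕 f) (-x) = f x := by
  calc 𝓕 (𝓕 f) (-x)
    _ = (𝓕⁻ (𝓕 f) : 𝓢(E, F)) x := by rw [SchwartzMap.fourierInv_apply_eq]; rfl
    _ = f x := by rw [FourierTransform.fourierInv_fourier_eq]

theorem fourier_schwartzPairing (B : F₁ →L[ℂ] F₂ →L[ℂ] F₃) (f : 𝓢(E, F₁)) (g : 𝓢(E, F₂)) :
    𝓕 (SchwartzMap.pairing B f g) = SchwartzMap.convolution B (𝓕 f) (𝓕 g) := by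
  suffices SchwartzMap.pairing B f g = 𝓕⁻ (SchwartzMap.convolution B (𝓕 f) (𝓕 g)) by simp [this]
  ext x
  rw [SchwartzMap.fourierInv_apply_eq, SchwartzMap.fourier_convolution]
  simp [fourier_fourier_apply_neg]

theorem enorm_fourier_pairing_le (B : F₁ →L[ℂ] F₂ →L[ℂ] F₃) (f : 𝓢(E, F₁)) (g : 𝓢(E, F₂))
    (ξ : E) :
    ‖𝓕 (fun x ↦ B (f x) (g x)) ξ‖ₑ ≤ ‖B‖ₑ * ∫⁻ η, ‖𝓕 f η‖ₑ * ‖𝓕 g (ξ - η)‖ₑ := by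
  have fourier_eq : 𝓕 (fun x ↦ B (f x) (g x)) ξ = ∫ η, B (𝓕 f η) (𝓕 g (ξ - η)) := by
    calc 𝓕 (fun x ↦ B (f x) (g x)) ξ
      _ = 𝓕 (SchwartzMap.pairing B f g) ξ := by rw [SchwartzMap.fourier_coe]; rfl
      _ = ∫ η, B (𝓕 f η) (𝓕 g (ξ - η)) := by
        rw [fourier_schwartzPairing, SchwartzMap.convolution_apply, convolution_def]
  rw [fourier_eq, ← lintegral_const_mul' _ _ enorm_ne_top]
  refine (enorm_integral_le_lintegral_enorm _).trans (lintegral_mono fun η ↦ ?_)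
  rw [← mul_assoc]
  exact B.le_opENorm₂ _ _

theorem sobolevENorm_sq (σ : ℝ) (f : E → F) :
    sobolevENorm σ f ^ 2 = ∫⁻ ξ, (bracketPow σ ξ * ‖𝓕 f ξ‖ₑ) ^ 2 := by
  rw [sobolevENorm, ← ENNReal.rpow_two, ← ENNReal.rpow_mul]
  norm_num

theorem bracketPow_mul_enorm_fourier_pairing_le (B : F₁ →L[ℂ] F₂ →L[ℂ] F₃) (f : 𝓢(E, F₁))
    (g : 𝓢(E, F₂)) (σ r s : ℝ) (ξ : E) :
    bracketPow σ ξ * ‖𝓕 (fun x ↦ B (f x) (g x)) ξ‖ₑ ≤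
      ‖B‖ₑ * ∫⁻ η, bracketPow σ ξ * (bracketPow (-r) η * bracketPow (-s) (ξ - η)) *
        ((bracketPow r η * ‖𝓕 f η‖ₑ) * (bracketPow s (ξ - η) * ‖𝓕 g (ξ - η)‖ₑ)) := by
  have cancel (τ : ℝ) (x : E) : bracketPow (-τ) x * bracketPow τ x = 1 := by
    rw [bracketPow_mul_bracketPow, neg_add_cancel, bracketPow_zero]
  calc bracketPow σ ξ * ‖𝓕 (fun x ↦ B (f x) (g x)) ξ‖ₑ
    _ ≤ bracketPow σ ξ * (‖B‖ₑ * ∫⁻ η, ‖𝓕 f η‖ₑ * ‖𝓕 g (ξ - η)‖ₑ) := by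
      gcongr
      exact enorm_fourier_pairing_le B f g ξ
    _ = ‖B‖ₑ * ∫⁻ η, bracketPow σ ξ * (‖𝓕 f η‖ₑ * ‖𝓕 g (ξ - η)‖ₑ) := by
      rw [mul_left_comm, lintegral_const_mul' _ _ (bracketPow_ne_top σ ξ)]
    _ = _ := by
      congr! 3 with η
      calc bracketPow σ ξ * (‖𝓕 f η‖ₑ * ‖𝓕 g (ξ - η)‖ₑ)
        _ = bracketPow σ ξ * ((bracketPow (-r) η * bracketPow r η) *
              (bracketPow (-s) (ξ - η) * bracketPow s (ξ - η))) *
              (‖𝓕 f η‖ₑ * ‖𝓕 g (ξ - η)‖ₑ) := by simp only [cancel, mul_one]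
        _ = _ := by ring

theorem measurable_bracketPow_mul_enorm_fourier (σ : ℝ) (f : 𝓢(E, F)) :
    Measurable fun ξ ↦ bracketPow σ ξ * ‖𝓕 f ξ‖ₑ :=
  (measurable_bracketPow σ).mul (𝓕 f).continuous.enorm.measurable

theorem exists_sobolevENorm_pairing_le (B : F₁ →L[ℂ] F₂ →L[ℂ] F₃) {r s : ℝ}
    (hr : r < finrank ℝ E / 2) (hs : s < finrank ℝ E / 2) (hrs : 0 < r + s) :
    ∃ C : ℝ≥0, ∀ (f : 𝓢(E, F₁)) (g : 𝓢(E, F₂)),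
      sobolevENorm (r + s - finrank ℝ E / 2) (fun x ↦ B (f x) (g x)) ≤
        C * sobolevENorm r f * sobolevENorm s g := by
  have hd : (0 : ℝ) < finrank ℝ E := by linarith
  have : Nontrivial E := finrank_pos_iff.1 (mod_cast hd)
  obtain ⟨K, hK⟩ := isL2ConvKernel_bracketPow (volume : Measure E) (a := r) (b := s)
    (c := finrank ℝ E / 2 - r - s) (by ring) hr hs (by linarith)
  rw [show -(finrank ℝ E / 2 - r - s) = r + s - finrank ℝ E / 2 by ring] at hK
  refine ⟨‖B‖₊ * NNReal.sqrt K, fun f g ↦ ?_⟩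
  have sq_le : sobolevENorm (r + s - finrank ℝ E / 2) (fun x ↦ B (f x) (g x)) ^ 2 ≤
      ‖B‖ₑ ^ 2 * (K * (sobolevENorm r f ^ 2 * sobolevENorm s g ^ 2)) := by
    have kernel_le := hK _ _ (measurable_bracketPow_mul_enorm_fourier r f)
      (measurable_bracketPow_mul_enorm_fourier s g)
    simp only [sobolevENorm_sq, ← SchwartzMap.fourier_coe]
    grw [← kernel_le, ← lintegral_const_mul' _ _ (by finiteness)]
    simp_rw [← mul_pow]
    exact lintegral_mono fun ξ ↦
      pow_le_pow_left' (bracketPow_mul_enorm_fourier_pairing_le B f g _ r s ξ) 2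
  refine (ENNReal.pow_le_pow_left_iff two_ne_zero).1 (sq_le.trans_eq ?_)
  have : (K : ℝ≥0∞) = (NNReal.sqrt K : ℝ≥0∞) ^ 2 := mod_cast (NNReal.sq_sqrt K).symm
  rw [this, enorm_eq_nnnorm]
  push_cast
  ring

theorem bilinear_sobolev_time_estimate_general (B : F₁ →L[ℂ] F₂ →L[ℂ] F₃) {r s : ℝ}
    (hr : r < finrank ℝ E / 2) (hs : s < finrank ℝ E / 2) (hrs : 0 < r + s) :
    ∃ C > (0 : ℝ), ∀ T : ℝ, 0 < T → ∀ (φ : ℝ → 𝓢(E, F₁)) (ψ : ℝ → 𝓢(E, F₂)),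
      (∫⁻ t in Set.Ioc (0 : ℝ) T,
          sobolevENorm (r + s - finrank ℝ E / 2) (fun x ↦ B (φ t x) (ψ t x)) ^ 2) ^ (1 / 2 : ℝ) ≤
        ENNReal.ofReal (C * T ^ (1 / 2 : ℝ)) *
          (⨆ t ∈ Set.Icc (0 : ℝ) T, sobolevENorm r (φ t)) *
          (⨆ t ∈ Set.Icc (0 : ℝ) T, sobolevENorm s (ψ t)) := by
  obtain ⟨C, hC⟩ := exists_sobolevENorm_pairing_le B hr hs hrs
  refine ⟨C + 1, by positivity, fun T hT φ ψ ↦ ?_⟩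
  set M := ⨆ t ∈ Set.Icc (0 : ℝ) T, sobolevENorm r (φ t)
  set N := ⨆ t ∈ Set.Icc (0 : ℝ) T, sobolevENorm s (ψ t)
  have product_le : ∀ t ∈ Set.Ioc 0 T,
      sobolevENorm (r + s - finrank ℝ E / 2) (fun x ↦ B (φ t x) (ψ t x)) ≤ C * M * N := by
    intro t ht
    have ht : t ∈ Set.Icc 0 T := Set.Ioc_subset_Icc_self ht
    refine (hC (φ t) (ψ t)).trans ?_
    gcongr
    · exact le_iSup₂_of_le t ht le_rfl
    · exact le_iSup₂_of_le t ht le_rfl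
  have time_le := rpow_setLIntegral_rpow_le (μ := volume) measurableSet_Ioc two_pos product_le
  simp only [ENNReal.rpow_two, Real.volume_Ioc, sub_zero] at time_le
  refine time_le.trans ?_
  calc C * M * N * ENNReal.ofReal T ^ (1 / 2 : ℝ)
    _ = ENNReal.ofReal (C * T ^ (1 / 2 : ℝ)) * M * N := by
      rw [ENNReal.ofReal_rpow_of_pos hT, ENNReal.ofReal_mul C.coe_nonneg, ENNReal.ofReal_coe_nnreal]
      ring
    _ ≤ ENNReal.ofReal ((C + 1) * T ^ (1 / 2 : ℝ)) * M * N := by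
      gcongr
      simp

end SobolevProduct

/-- Time-localized bilinear Sobolev estimate: for 0 ≤ r,s < 1 with 0 < r + s ≤ 1 there
is C > 0 such that for all 0 < T ≤ 1 and all continuous curves φ, ψ : ℝ → 𝓢(ℝ²,ℂ),
(∫₀^T ‖φ(t)ψ(t)‖²_{H^{r+s−1}} dt)^{1/2}
  ≤ C T^{1/2} (sup_{t∈[0,T]} ‖φ(t)‖_{H^r}) (sup_{t∈[0,T]} ‖ψ(t)‖_{H^s}). -/
theorem bilinear_sobolev_time_estimate (r s : ℝ)
    (hr0 : 0 ≤ r) (hr1 : r < 1) (hs0 : 0 ≤ s) (hs1 : s < 1)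
    (hrs0 : 0 < r + s) (hrs1 : r + s ≤ 1) :
    ∃ C > (0 : ℝ), ∀ T : ℝ, 0 < T → T ≤ 1 →
      ∀ φ ψ : ℝ → SchwartzMap (EuclideanSpace ℝ (Fin 2)) ℂ,
        Continuous φ → Continuous ψ →
        (∫⁻ t in Set.Ioc (0 : ℝ) T,
            (sobolevNorm (r + s - 1) (fun x => φ t x * ψ t x)) ^ 2) ^ (1/2 : ℝ) ≤
          ENNReal.ofReal (C * T ^ (1/2 : ℝ)) *
            (⨆ t ∈ Set.Icc (0 : ℝ) T, sobolevNorm r (φ t)) *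
            (⨆ t ∈ Set.Icc (0 : ℝ) T, sobolevNorm s (ψ t)) := by
  obtain ⟨C, hC, estimate⟩ := bilinear_sobolev_time_estimate_general
    (E := EuclideanSpace ℝ (Fin 2)) (ContinuousLinearMap.mul ℂ ℂ) (by simpa) (by simpa) hrs0
  exact ⟨C, hC, fun T hT _ φ ψ _ _ ↦ by
    simpa [sobolevNorm_eq_sobolevENorm] using estimate T hT φ ψ⟩
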